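/- arXiv:2410.11296 — 2 statements merged into one kernel-verified Lean document; each statement's English description precedes it below -/
import Mathlib

section
/- Let M ≥ 1 players have action sets A_j = [a_j, b_j] ⊆ ℝ (nonempty compact intervals) and payoff functions J_j : ∏_{k=1}^M A_k → ℝ. Suppose each J_j is continuous on ∏_k A_k, and for each j and each fixed choice of the other players' actions y_{−j}, the function y_j ↦ J_j(y_j, y_{−j}) is quasiconcave on A_j. Then the game has a pure Nash equilibrium: there exists y* ∈ ∏_k A_k such that for every j and every y_j ∈ A_j, J_j(y*) ≥ J_j(y_j, y*_{−j}). -/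
/-!
Let `U j` (resp. `V j`) be the set of profiles `y` to which player `j` has a best response
`z ≥ y j` (resp. `z ≤ y j`). These sets are closed, together they cover the box, and they contain
the faces `y j = a j` and `y j = b j` respectively. A point common to all of them is an
equilibrium: player `j` has best responses on both sides of `y j`, and the set of best responses
is convex by quasiconcavity, so `y j` is itself one.

That such a common point exists is a form of the Poincaré–Miranda theorem (`poincare_miranda`).
It follows by compactness from Kuhn's cubical lemma (`kuhn`) on finer and finer grids, which in
turn comes from a version of Sperner's lemma (`sperner`) for the Kuhn triangulation of a grid.
Sperner's lemma is proved by counting modulo two. The indicator that a simplex is fully labelled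
is a determinant over `ZMod 2`, whose Laplace expansion is a sum over the facets. In the sum over
all simplices the interior facets cancel in pairs, the labelling conditions annihilate all boundary
facets outside the face `x 0 = 0`, and that face is handled by induction on the dimension.
-/

namespace KuhnSperner

/-! ### Sperner's lemma on the Kuhn triangulation -/

section Combinatorics

open Finset Equiv

/-- The `i`-th vertex of the Kuhn simplex of the unit cube with lowest corner `q` that is
attached to the permutation `τ`: coordinate `j` is raised by one exactly when `i ≤ τ j`, so the
vertices descend from `q + 1` (`i = 0`) to `q` (`i = M`), one coordinate at a time. -/
def vertex {M : ℕ} (q : Fin M → ℕ) (τ : Perm (Fin M)) (i : ℕ) : Fin M → ℕ :=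
  fun j => q j + if i ≤ (τ j : ℕ) then 1 else 0

/-- The incidence matrix modulo two between the positions of a tuple `v` of labels and the
consecutive labels `c, c + 1, …, c + m - 1`. Its determinant is `1` when `v` enumerates these
labels and `0` otherwise. -/
def labelMatrix {m : ℕ} (v : Fin m → ℕ) (c : ℕ) : Matrix (Fin m) (Fin m) (ZMod 2) :=
  Matrix.of fun i j => if v i = j + c then 1 else 0

lemma det_labelMatrix_eq_zero {m : ℕ} (v : Fin m → ℕ) (c : ℕ) (j : Fin m)
    (h : ∀ i, v i ≠ j + c) : (labelMatrix v c).det = 0 :=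
  Matrix.det_eq_zero_of_column_eq_zero j fun i => by simp [labelMatrix, h i]

/-- A simplex is fully labelled if and only if it has an odd number of facets carrying exactly
the labels `1, …, m`. The columns of the label matrix sum to the all-ones column, and
expanding along the latter yields the facets. -/
lemma det_labelMatrix_eq_sum_facets {m : ℕ} (v : Fin (m + 1) → ℕ) (hv : ∀ i, v i ≤ m) :
    (labelMatrix v 0).det = ∑ k : Fin (m + 1), (labelMatrix (v ∘ k.succAbove) 1).det := by
  have h := Matrix.det_updateCol_sum (labelMatrix v 0) 0 (fun _ => 1)
  rw [one_smul] at h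
  rw [← h, Matrix.det_succ_column_zero]
  refine Finset.sum_congr rfl fun k _ => ?_
  have h1 : ∑ i : Fin (m + 1), (1 : ZMod 2) • labelMatrix v 0 k i = 1 := by
    simp only [labelMatrix, Matrix.of_apply, add_zero, one_smul]
    rw [Finset.sum_eq_single (⟨v k, by have := hv k; omega⟩ : Fin (m + 1))]
    · simp
    · intro b _ hb
      rw [if_neg]
      intro h; apply hb; ext; simp [h]
    · simp
  have h2 : (-1 : ZMod 2) = 1 := by decide
  rw [Matrix.updateCol_self, h1, h2, one_pow, one_mul, one_mul]
  congr 1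

/-- Two Kuhn simplices of a cube that share an interior facet cancel modulo two: exchanging the
values `i` and `i + 1` of the permutation moves only the vertex opposite to that facet. -/
lemma sum_interior_facet {m : ℕ} (L : (Fin (m + 1) → ℕ) → ℕ) (q : Fin (m + 1) → ℕ) (i : Fin m) :
    ∑ τ : Perm (Fin (m + 1)),
      (labelMatrix ((fun k : Fin (m + 2) => L (vertex q τ k)) ∘
        (i.castSucc.succ).succAbove) 1).det = 0 := by
  refine Finset.sum_involution (fun τ _ => swap i.castSucc i.succ * τ) ?_ ?_ ?_ ?_
  · intro τ _
    suffices h : ∀ k : Fin (m + 1),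
        L (vertex q (swap i.castSucc i.succ * τ) ((i.castSucc.succ).succAbove k : Fin (m + 2))) =
          L (vertex q τ ((i.castSucc.succ).succAbove k : Fin (m + 2))) by
      simp only [Function.comp_def, h]
      exact CharTwo.add_self_eq_zero _
    · intro k
      congr 1
      funext j
      have hk : (((i.castSucc.succ).succAbove k : Fin (m + 2)) : ℕ) ≠ i + 1 := by
        intro h
        exact Fin.succAbove_ne (i.castSucc.succ) k (Fin.ext (by simpa using h))
      generalize (((i.castSucc.succ).succAbove k : Fin (m + 2)) : ℕ) = t at hk
      change (q j + if t ≤ (swap i.castSucc i.succ (τ j) : ℕ) then 1 else 0) =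
        q j + if t ≤ (τ j : ℕ) then 1 else 0
      congr 1
      rcases eq_or_ne (τ j) i.castSucc with h | h
      · rw [h, swap_apply_left]
        simp only [Fin.val_succ, Fin.val_castSucc]
        grind
      rcases eq_or_ne (τ j) i.succ with h' | h'
      · rw [h', swap_apply_right]
        simp only [Fin.val_succ, Fin.val_castSucc]
        grind
      rw [swap_apply_of_ne_of_ne h h']
  · intro τ _ _ h
    have h3 : swap i.castSucc i.succ = 1 := by simpa using h
    rw [swap_eq_one_iff] at h3
    exact absurd h3 (Fin.castSucc_lt_succ).ne
  · simp
  · intro τ _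
    simp [← mul_assoc]

/-- The facet opposite to the last vertex of a Kuhn simplex is also the facet opposite to the
first vertex of a Kuhn simplex in an adjacent cube. The step to that cube is in the direction
`τ⁻¹ (Fin.last m)`, the one raised at every vertex but the last. -/
lemma vertex_rotate {m : ℕ} (q : Fin (m + 1) → ℕ) (τ : Perm (Fin (m + 1))) (i : Fin (m + 1)) :
    vertex q τ i =
      vertex (q + Pi.single (τ⁻¹ (Fin.last m)) 1) (finRotate (m + 1) * τ) (i + 1) := by
  funext j
  change (q j + if (i : ℕ) ≤ (τ j : ℕ) then 1 else 0) =
    q j + (Pi.single (τ⁻¹ (Fin.last m)) 1 : Fin (m + 1) → ℕ) j +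
    if (i : ℕ) + 1 ≤ (finRotate (m + 1) (τ j) : ℕ) then 1 else 0
  rcases eq_or_ne (τ j) (Fin.last m) with h | h
  · have hj : τ⁻¹ (Fin.last m) = j := by rw [← h]; simp
    rw [h, hj, finRotate_last]
    have := i.is_lt
    simp
    omega
  · have hj : j ≠ τ⁻¹ (Fin.last m) := by
      rintro rfl; simp at h
    rw [Pi.single_eq_of_ne hj, coe_finRotate_of_ne_last h]
    simp

/-- A telescoping sum modulo two in the `j`-th coordinate: only the terms on the lower face
survive when those on the upper face vanish. -/
lemma sum_add_sum_shift {M n : ℕ} (j : Fin M) (h : (Fin M → ℕ) → ZMod 2)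
    (hn : ∀ q, q j = n → h q = 0) :
    ∑ q ∈ Fintype.piFinset (fun _ : Fin M => range n), h q +
      ∑ q ∈ Fintype.piFinset (fun _ : Fin M => range n), h (q + Pi.single j 1) =
    ∑ q ∈ Fintype.piFinset (fun _ : Fin M => range n) with q j = 0, h q := by
  set Q := Fintype.piFinset (fun _ : Fin M => range n)
  have h1 : ∑ q ∈ Q, h (q + Pi.single j 1) = ∑ q ∈ Q with ¬ q j = 0, h q := by
    have h2 : ∑ q ∈ Q, h (q + Pi.single j 1) =
        ∑ q ∈ Q with q j + 1 ≠ n, h (q + Pi.single j 1) := by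
      symm
      apply Finset.sum_filter_of_ne
      intro q _ hq hqn
      exact hq (hn _ (by simpa using hqn))
    rw [h2]
    refine Finset.sum_bij' (fun q _ => q + Pi.single j 1) (fun q _ => q - Pi.single j 1)
      ?_ ?_ ?_ ?_ ?_
    · intro q hq
      simp only [Q, mem_filter, Fintype.mem_piFinset, mem_range] at hq ⊢
      refine ⟨fun k => ?_, by simp⟩
      rcases eq_or_ne k j with rfl | hk
      · have := hq.1 k
        simp; omega
      · simpa [hk] using hq.1 k
    · intro q hq
      simp only [Q, mem_filter, Fintype.mem_piFinset, mem_range] at hq ⊢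
      refine ⟨fun k => ?_, ?_⟩
      · have := hq.1 k
        simp only [Pi.sub_apply]; omega
      · have := hq.1 j
        simp; omega
    · intro q _
      funext k; simp
    · intro q hq
      simp only [mem_filter] at hq
      funext k
      rcases eq_or_ne k j with rfl | hk
      · simp; omega
      · simp [hk]
    · intros; rfl
  rw [h1, ← Finset.sum_filter_add_sum_filter_not Q (fun q => q j = 0) h, add_assoc,
    CharTwo.add_self_eq_zero, add_zero]

/-- Sperner's lemma for the Kuhn triangulation of the grid `{0, …, n}^M`: the number of fully
labelled simplices is odd, provided that label `j + 1` is avoided on the face `x j = n` and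
labels at most `j` are avoided on the face `x j = 0`. -/
theorem sperner (M n : ℕ) (hn : 0 < n) (L : (Fin M → ℕ) → ℕ) (hL : ∀ x, L x ≤ M)
    (h0 : ∀ x (j : Fin M), x j = 0 → (j : ℕ) + 1 ≤ L x)
    (h1 : ∀ x (j : Fin M), x j = n → L x ≠ (j : ℕ) + 1) :
    ∑ q ∈ Fintype.piFinset (fun _ : Fin M => range n), ∑ τ : Perm (Fin M),
      (labelMatrix (fun i : Fin (M + 1) => L (vertex q τ i)) 0).det = 1 := by
  induction M with
  | zero =>
    have : ∀ x, L x = 0 := fun x => Nat.le_zero.1 (hL x)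
    simp [labelMatrix, this]
  | succ m ih =>
    set Q := Fintype.piFinset (fun _ : Fin (m + 1) => range n) with hQ
    -- `H q τ` tests the facet opposite to the first vertex, on which coordinate `τ⁻¹ 0` is fixed.
    set H : (Fin (m + 1) → ℕ) → Perm (Fin (m + 1)) → ZMod 2 := fun q τ =>
      (labelMatrix (fun i : Fin (m + 1) => L (vertex q τ (i + 1))) 1).det with hH
    have hfix : ∀ (q : Fin (m + 1) → ℕ) (τ : Perm (Fin (m + 1))) (i : ℕ),
        vertex q τ (i + 1) (τ⁻¹ 0) = q (τ⁻¹ 0) := by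
      intro q τ i; simp [vertex]
    have step1 : ∀ q, ∑ τ : Perm (Fin (m + 1)),
        (labelMatrix (fun i : Fin (m + 2) => L (vertex q τ i)) 0).det =
        ∑ τ : Perm (Fin (m + 1)), (H q τ + H (q + Pi.single (τ⁻¹ 0) 1) τ) := by
      intro q
      have e : ∀ τ : Perm (Fin (m + 1)), _ := fun τ =>
        det_labelMatrix_eq_sum_facets (fun i : Fin (m + 2) => L (vertex q τ i)) (fun i => hL _)
      rw [Finset.sum_congr rfl fun τ _ => e τ, Finset.sum_comm, Fin.sum_univ_succ,
        Fin.sum_univ_castSucc, Finset.sum_eq_zero (fun i _ => sum_interior_facet L q i), zero_add,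
        Finset.sum_add_distrib]
      congr 1
      refine Eq.trans ?_ (Equiv.sum_comp (Equiv.mulLeft (finRotate (m + 1)))
        (fun τ => H (q + Pi.single (τ⁻¹ 0) 1) τ))
      refine Finset.sum_congr rfl fun τ _ => ?_
      have hinv : (finRotate (m + 1) * τ)⁻¹ 0 = τ⁻¹ (Fin.last m) := by
        rw [Perm.inv_eq_iff_eq]; simp
      simp only [hH, Equiv.coe_mulLeft, hinv, ← vertex_rotate]
      congr 2
      funext i
      simp
    rw [Finset.sum_congr rfl fun q _ => step1 q, Finset.sum_comm]
    have step2 : ∀ τ : Perm (Fin (m + 1)),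
        ∑ q ∈ Q, (H q τ + H (q + Pi.single (τ⁻¹ 0) 1) τ) =
          ∑ q ∈ Q with q (τ⁻¹ 0) = 0, H q τ := by
      intro τ
      rw [Finset.sum_add_distrib]
      refine sum_add_sum_shift (τ⁻¹ 0) (fun q => H q τ) fun q hq => ?_
      exact det_labelMatrix_eq_zero _ _ (τ⁻¹ 0) fun i => h1 _ _ (by rw [hfix, hq])
    have step3 : ∀ τ : Perm (Fin (m + 1)), τ 0 ≠ 0 →
        ∑ q ∈ Q with q (τ⁻¹ 0) = 0, H q τ = 0 := by
      intro τ hτ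
      refine Finset.sum_eq_zero fun q hq => ?_
      refine det_labelMatrix_eq_zero _ _ 0 fun i hi => ?_
      have h2 := h0 (vertex q τ (i + 1)) (τ⁻¹ 0) (by rw [hfix]; exact (mem_filter.1 hq).2)
      have h3 : ((τ⁻¹ 0 : Fin (m + 1)) : ℕ) ≠ 0 := by
        intro h
        have : τ⁻¹ 0 = 0 := Fin.ext h
        rw [Perm.inv_eq_iff_eq] at this
        exact hτ this.symm
      simp at hi
      omega
    rw [Finset.sum_congr rfl fun τ _ => step2 τ, ← Equiv.sum_comp Perm.decomposeFin.symm,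
      Fintype.sum_prod_type, Finset.sum_eq_single 0]
    rotate_left
    · intro p _ hp
      exact Finset.sum_eq_zero fun e _ => step3 _ (by simpa using hp)
    · simp
    -- The surviving facets triangulate the face `x 0 = 0`, where all labels are positive.
    have key := ih (fun y => L (Fin.cons 0 y) - 1)
      (fun y => by have := hL (Fin.cons 0 y); omega)
      (fun y j hj => by
        have := h0 (Fin.cons 0 y) j.succ (by simpa using hj)
        simp at this; omega)
      (fun y j hj => by
        have := h1 (Fin.cons 0 y) j.succ (by simpa using hj)
        simp at this; omega)
    rw [← key]
    conv_rhs => rw [Finset.sum_comm]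
    refine Finset.sum_congr rfl fun e _ => ?_
    have hinv : (Perm.decomposeFin.symm ((0 : Fin (m + 1)), e))⁻¹ 0 = 0 := by
      rw [Perm.inv_eq_iff_eq]; simp
    rw [hinv]
    refine Finset.sum_bij' (fun q _ => Fin.tail q) (fun q _ => Fin.cons 0 q) ?_ ?_ ?_ ?_ ?_
    · intro q hq
      simp only [hQ, mem_filter, Fintype.mem_piFinset, mem_range] at hq ⊢
      exact fun k => hq.1 k.succ
    · intro q hq
      simp only [hQ, mem_filter, Fintype.mem_piFinset, mem_range] at hq ⊢
      refine ⟨fun k => ?_, by simp⟩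
      refine Fin.cases ?_ (fun k => ?_) k
      · simpa using hn
      · simpa using hq k
    · intro q hq
      rw [← (mem_filter.1 hq).2]
      exact Fin.cons_self_tail q
    · intro q _
      simp
    · intro q hq
      simp only [hH]
      congr 1
      ext i j
      have hv : vertex q (Perm.decomposeFin.symm ((0 : Fin (m + 1)), e)) (i + 1) =
          Fin.cons 0 (vertex (Fin.tail q) e i) := by
        funext k
        refine Fin.cases ?_ (fun k => ?_) k
        · simp [vertex, (mem_filter.1 hq).2]
        · simp [vertex, Fin.tail]
      have hpos := h0 (Fin.cons 0 (vertex (Fin.tail q) e i)) 0 (by simp)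
      simp only [labelMatrix, Matrix.of_apply, hv]
      congr 1
      simp at hpos ⊢
      omega

/-- Kuhn's cubical lemma, a discrete Poincaré–Miranda theorem: if each predicate `P j` holds on
the face `x j = 0` of the grid and fails on the opposite face `x j = n`, then on a single unit
cube every `P j` takes both truth values. -/
theorem kuhn (M n : ℕ) (hn : 0 < n) (P : Fin M → (Fin M → ℕ) → Prop)
    (h0 : ∀ x j, x j = 0 → P j x) (h1 : ∀ x j, x j = n → ¬ P j x) :
    ∃ q : Fin M → ℕ, (∀ j, q j < n) ∧ ∀ j, ∃ r s : Fin M → ℕ,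
      (∀ k, q k ≤ r k ∧ r k ≤ q k + 1) ∧ (∀ k, q k ≤ s k ∧ s k ≤ q k + 1) ∧
      P j r ∧ ¬ P j s := by
  classical
  -- The label is one more than the largest `j` with `P j x`, and `0` if there is none.
  let L : (Fin M → ℕ) → ℕ := fun x => (univ.filter fun j => P j x).sup fun j => (j : ℕ) + 1
  have hle : ∀ x j, P j x → (j : ℕ) + 1 ≤ L x := fun x j h =>
    Finset.le_sup (f := fun j : Fin M => (j : ℕ) + 1) (by simpa using h)
  have hP : ∀ x (j : Fin M), L x = j + 1 → P j x := by
    intro x j h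
    rcases (univ.filter fun j => P j x).eq_empty_or_nonempty with he | hne
    · simp [L, he] at h
    · obtain ⟨k, hk, hk'⟩ := Finset.exists_mem_eq_sup _ hne (fun j : Fin M => (j : ℕ) + 1)
      have : k = j := Fin.ext (by
        have : L x = k + 1 := hk'
        omega)
      subst this
      exact (mem_filter.1 hk).2
  have hs := sperner M n hn L (fun x => Finset.sup_le fun j _ => j.is_lt)
    (fun x j h => hle x j (h0 x j h)) (fun x j h h' => h1 x j h (hP x j h'))
  obtain ⟨q, hq, hq'⟩ := Finset.exists_ne_zero_of_sum_ne_zero (hs.trans_ne one_ne_zero)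
  obtain ⟨τ, -, hτ⟩ := Finset.exists_ne_zero_of_sum_ne_zero hq'
  have hall : ∀ c : Fin (M + 1), ∃ i : Fin (M + 1), L (vertex q τ i) = c := by
    intro c
    by_contra! h
    exact hτ (det_labelMatrix_eq_zero _ _ c (by simpa using h))
  have hbd : ∀ i k, q k ≤ vertex q τ i k ∧ vertex q τ i k ≤ q k + 1 := by
    intro i k
    simp only [vertex]
    split_ifs <;> omega
  refine ⟨q, fun j => by simpa using (Fintype.mem_piFinset.1 hq) j, fun j => ?_⟩
  obtain ⟨i, hi⟩ := hall j.succ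
  obtain ⟨i', hi'⟩ := hall 0
  refine ⟨_, _, hbd i, hbd i', hP _ _ (by simpa using hi), fun h => ?_⟩
  have := hle _ _ h
  simp at hi'
  omega

end Combinatorics

/-! ### From the grid to the box -/

/-- The Poincaré–Miranda theorem for closed covers of a box: if for each `j` the box is covered
by closed sets `U j` and `V j` containing the faces `y j = a j` and `y j = b j` respectively,
then all these sets have a common point in the box. -/
theorem poincare_miranda {M : ℕ} (a b : Fin M → ℝ) (hab : a ≤ b) (U V : Fin M → Set (Fin M → ℝ))
    (hU : ∀ j, IsClosed (U j)) (hV : ∀ j, IsClosed (V j))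
    (hUV : ∀ j, ∀ y ∈ Set.Icc a b, y ∈ U j ∨ y ∈ V j)
    (ha : ∀ j, ∀ y ∈ Set.Icc a b, y j = a j → y ∈ U j)
    (hb : ∀ j, ∀ y ∈ Set.Icc a b, y j = b j → y ∈ V j) :
    ∃ y ∈ Set.Icc a b, ∀ j, y ∈ U j ∧ y ∈ V j := by
  let g : (Fin M → ℝ) → ℝ := fun y => ∑ j, (Metric.infDist y (U j) + Metric.infDist y (V j))
  have hg : Continuous g := continuous_finsetSum _ fun j _ =>
    (Metric.continuous_infDist_pt _).add (Metric.continuous_infDist_pt _)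
  obtain ⟨y, hy, hmin⟩ := (isCompact_Icc : IsCompact (Set.Icc a b)).exists_isMinOn
    ⟨a, Set.left_mem_Icc.2 hab⟩ hg.continuousOn
  have hnonneg : ∀ j, 0 ≤ Metric.infDist y (U j) + Metric.infDist y (V j) := fun j =>
    add_nonneg Metric.infDist_nonneg Metric.infDist_nonneg
  have hle : ∀ n : ℕ, 0 < n → g y ≤ (M * (2 * dist b a)) / n := by
    intro n hn
    have hn' : (0 : ℝ) < n := by exact_mod_cast hn
    -- Grid points; capping at `n` keeps them in the box for every `x`.
    let p : (Fin M → ℕ) → (Fin M → ℝ) := fun x k => a k + (min (x k) n : ℕ) / n * (b k - a k)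
    have hp : ∀ x, p x ∈ Set.Icc a b := by
      intro x
      refine ⟨fun k => ?_, fun k => ?_⟩
      · have : 0 ≤ ((min (x k) n : ℕ) : ℝ) / n * (b k - a k) :=
          mul_nonneg (by positivity) (sub_nonneg.2 (hab k))
        simp only [p]; linarith
      · have h1 : ((min (x k) n : ℕ) : ℝ) / n ≤ 1 := by
          rw [div_le_one hn']; exact_mod_cast min_le_right _ _
        have := mul_le_of_le_one_left (sub_nonneg.2 (hab k)) h1
        simp only [p]; linarith
    have hp0 : ∀ x j, x j = 0 → p x j = a j := by
      intro x j h; simp [p, h]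
    have hpn : ∀ x j, x j = n → p x j = b j := by
      intro x j h; simp [p, h, hn'.ne']
    have hpd : ∀ q x : Fin M → ℕ, (∀ k, q k ≤ x k ∧ x k ≤ q k + 1) →
        dist (p q) (p x) ≤ dist b a / n := by
      intro q x h
      rw [dist_pi_le_iff (by positivity)]
      intro k
      obtain ⟨h1, h2⟩ := h k
      have h3 : ((min (q k) n : ℕ) : ℝ) ≤ (min (x k) n : ℕ) := by
        exact_mod_cast min_le_min_right n h1
      have h4 : ((min (x k) n : ℕ) : ℝ) ≤ (min (q k) n : ℕ) + 1 := by
        have : min (x k) n ≤ min (q k) n + 1 := by omega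
        exact_mod_cast this
      have h5 : b k - a k ≤ dist b a :=
        (le_abs_self _).trans ((Real.dist_eq _ _).symm.le.trans (dist_le_pi_dist b a k))
      have h6 := sub_nonneg.2 (hab k)
      have h7 : p q k - p x k =
          -(((min (x k) n : ℕ) - (min (q k) n : ℕ)) * (b k - a k) / n) := by
        simp only [p]; ring
      rw [Real.dist_eq, h7, abs_neg, abs_of_nonneg
        (div_nonneg (mul_nonneg (by linarith) h6) hn'.le)]
      gcongr
      exact (mul_le_of_le_one_left h6 (by linarith)).trans h5
    obtain ⟨q, -, hq⟩ := kuhn M n hn (fun j x => p x ∈ U j ∧ x j ≠ n)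
      (fun x j h => ⟨ha j _ (hp x) (hp0 x j h), by omega⟩) (fun x j h h' => h'.2 h)
    refine (isMinOn_iff.1 hmin (p q) (hp q)).trans ?_
    have hj : ∀ j ∈ (Finset.univ : Finset (Fin M)),
        Metric.infDist (p q) (U j) + Metric.infDist (p q) (V j) ≤ 2 * dist b a / n := by
      intro j _
      obtain ⟨r, s, hr, hs, hPr, hPs⟩ := hq j
      have hsV : p s ∈ V j := by
        by_cases h : s j = n
        · exact hb j _ (hp s) (hpn s j h)
        · exact (hUV j _ (hp s)).resolve_left fun h' => hPs ⟨h', h⟩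
      have e1 := (Metric.infDist_le_dist_of_mem hPr.1).trans (hpd q r hr)
      have e2 := (Metric.infDist_le_dist_of_mem hsV).trans (hpd q s hs)
      rw [mul_div_assoc]
      linarith
    refine (Finset.sum_le_card_nsmul _ _ _ hj).trans_eq ?_
    simp [mul_div_assoc]
  have hzero : g y ≤ 0 := by
    refine ge_of_tendsto (tendsto_const_div_atTop_nhds_zero_nat (M * (2 * dist b a))) ?_
    filter_upwards [Filter.eventually_gt_atTop 0] with n hn using hle n hn
  have hterm : ∀ j, Metric.infDist y (U j) + Metric.infDist y (V j) ≤ 0 := fun j =>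
    (Finset.single_le_sum (fun i _ => hnonneg i) (Finset.mem_univ j)).trans hzero
  refine ⟨y, hy, fun j => ?_⟩
  have h1 := hterm j
  have h2 : 0 ≤ Metric.infDist y (U j) := Metric.infDist_nonneg
  have h3 : 0 ≤ Metric.infDist y (V j) := Metric.infDist_nonneg
  have hUne : (U j).Nonempty := ⟨a, ha j a (Set.left_mem_Icc.2 hab) rfl⟩
  have hVne : (V j).Nonempty := ⟨b, hb j b (Set.right_mem_Icc.2 hab) rfl⟩
  exact ⟨((hU j).mem_iff_infDist_zero hUne).2 (by linarith),
    ((hV j).mem_iff_infDist_zero hVne).2 (by linarith)⟩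

end KuhnSperner

/-! ### Best responses and equilibria -/

/-- For a closed relation `S`, the profiles `y` in the box to which player `j` has a best
response `z` with `(y, z) ∈ S` form a closed set: it is the projection of a compact set of
pairs `(y, z)`. -/
lemma isClosed_exists_bestResponse {M : ℕ} (a b : Fin M → ℝ) (j : Fin M) (f : (Fin M → ℝ) → ℝ)
    (hf : Continuous f) (S : Set ((Fin M → ℝ) × ℝ)) (hS : IsClosed S) :
    IsClosed {y | y ∈ Set.Icc a b ∧ ∃ z ∈ Set.Icc (a j) (b j), (y, z) ∈ S ∧
      ∀ w ∈ Set.Icc (a j) (b j), f (Function.update y j w) ≤ f (Function.update y j z)} := by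
  let C : Set ((Fin M → ℝ) × ℝ) := (Set.Icc a b ×ˢ Set.Icc (a j) (b j)) ∩ (S ∩
    ⋂ w ∈ Set.Icc (a j) (b j),
      {x | f (Function.update x.1 j w) ≤ f (Function.update x.1 j x.2)})
  have hC : IsCompact C := by
    refine (isCompact_Icc.prod isCompact_Icc).inter_right (hS.inter ?_)
    refine isClosed_biInter fun w _ => isClosed_le ?_ ?_
    · exact hf.comp (continuous_fst.update j continuous_const)
    · exact hf.comp (continuous_fst.update j continuous_snd)
  convert (hC.image continuous_fst).isClosed using 1
  ext y
  constructor
  · rintro ⟨hy, z, hz, hyz, h⟩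
    exact ⟨(y, z), ⟨⟨hy, hz⟩, hyz, by simpa using h⟩, rfl⟩
  · rintro ⟨⟨y, z⟩, ⟨⟨hy, hz⟩, hyz, h⟩, rfl⟩
    exact ⟨hy, z, hz, hyz, by simpa using h⟩

/-- Existence of a pure Nash equilibrium for quasiconcave games with
one-dimensional compact interval action sets (Debreu–Glicksberg–Fan). Each player
`j` has action set `[a j, b j]`, a payoff `J j` continuous on the product of the
action sets, and, for every fixed profile of the other players' actions, the map
`z ↦ J j (Function.update y j z)` is quasiconcave on `[a j, b j]` (all its
superlevel sets are convex). Then a pure Nash equilibrium exists. -/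
theorem quasiconcave_game_has_pure_nash_equilibrium
    (M : ℕ) (hM : 1 ≤ M) (a b : Fin M → ℝ) (hab : ∀ j, a j ≤ b j)
    (K : Set (Fin M → ℝ))
    (hK : K = Set.pi Set.univ fun j => Set.Icc (a j) (b j))
    (J : Fin M → (Fin M → ℝ) → ℝ)
    (hJcont : ∀ j, ContinuousOn (J j) K)
    (hqc : ∀ j, ∀ y ∈ K, ∀ t : ℝ,
      Convex ℝ {z ∈ Set.Icc (a j) (b j) | t ≤ J j (Function.update y j z)}) :
    ∃ ystar ∈ K, ∀ j, ∀ z ∈ Set.Icc (a j) (b j),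
      J j (Function.update ystar j z) ≤ J j ystar := by
  rw [Set.pi_univ_Icc] at hK
  subst hK
  -- Composing with the coordinatewise retraction onto the box makes the payoffs continuous
  -- everywhere without changing them on the box.
  let c : (Fin M → ℝ) → (Fin M → ℝ) := fun y k => max (a k) (min (b k) (y k))
  have hc : Continuous c := by fun_prop
  have hcK : ∀ y, c y ∈ Set.Icc a b := fun y =>
    ⟨fun k => le_max_left _ _, fun k => max_le (hab k) (min_le_left _ _)⟩
  have hcid : ∀ y ∈ Set.Icc a b, c y = y := by
    intro y hy
    funext k
    simp only [c]
    rw [min_eq_right (hy.2 k), max_eq_right (hy.1 k)]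
  let f : Fin M → (Fin M → ℝ) → ℝ := fun j y => J j (c y)
  have hf : ∀ j, Continuous (f j) := fun j => (hJcont j).comp_continuous hc hcK
  have hup : ∀ y ∈ Set.Icc a b, ∀ j, ∀ z ∈ Set.Icc (a j) (b j),
      Function.update y j z ∈ Set.Icc a b := by
    intro y hy j z hz
    exact ⟨le_update_iff.2 ⟨hz.1, fun k _ => hy.1 k⟩, update_le_iff.2 ⟨hz.2, fun k _ => hy.2 k⟩⟩
  have hfJ : ∀ y ∈ Set.Icc a b, ∀ j, ∀ z ∈ Set.Icc (a j) (b j),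
      f j (Function.update y j z) = J j (Function.update y j z) := fun y hy j z hz =>
    congrArg (J j) (hcid _ (hup y hy j z hz))
  have hbest : ∀ y : Fin M → ℝ, ∀ j, ∃ z ∈ Set.Icc (a j) (b j), ∀ w ∈ Set.Icc (a j) (b j),
      f j (Function.update y j w) ≤ f j (Function.update y j z) := by
    intro y j
    obtain ⟨z, hz, h⟩ := (isCompact_Icc : IsCompact (Set.Icc (a j) (b j))).exists_isMaxOn
      ⟨a j, Set.left_mem_Icc.2 (hab j)⟩
      ((hf j).comp (continuous_const.update j continuous_id : Continuous
        fun z : ℝ => Function.update y j z)).continuousOn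
    exact ⟨z, hz, isMaxOn_iff.1 h⟩
  obtain ⟨y, hy, h⟩ := KuhnSperner.poincare_miranda a b hab _ _
    (fun j => isClosed_exists_bestResponse a b j (f j) (hf j) {x | x.1 j ≤ x.2}
      (isClosed_le (by fun_prop) (by fun_prop)))
    (fun j => isClosed_exists_bestResponse a b j (f j) (hf j) {x | x.2 ≤ x.1 j}
      (isClosed_le (by fun_prop) (by fun_prop)))
    (fun j y hy => by
      obtain ⟨z, hz, h⟩ := hbest y j
      rcases le_total (y j) z with hyz | hyz
      · exact Or.inl ⟨hy, z, hz, hyz, h⟩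
      · exact Or.inr ⟨hy, z, hz, hyz, h⟩)
    (fun j y hy hya => by
      obtain ⟨z, hz, h⟩ := hbest y j
      exact ⟨hy, z, hz, hya.trans_le hz.1, h⟩)
    (fun j y hy hyb => by
      obtain ⟨z, hz, h⟩ := hbest y j
      exact ⟨hy, z, hz, hz.2.trans_eq hyb.symm, h⟩)
  refine ⟨y, hy, fun j w hw => ?_⟩
  obtain ⟨⟨-, z, hz, hyz, hzmax⟩, ⟨-, z', hz', hyz', hzmax'⟩⟩ := h j
  have hmem : y j ∈ {x ∈ Set.Icc (a j) (b j) |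
      J j (Function.update y j w) ≤ J j (Function.update y j x)} := by
    refine (hqc j y hy _).ordConnected.out ⟨hz', ?_⟩ ⟨hz, ?_⟩ ⟨hyz', hyz⟩
    · rw [← hfJ y hy j w hw, ← hfJ y hy j z' hz']
      exact hzmax' w hw
    · rw [← hfJ y hy j w hw, ← hfJ y hy j z hz]
      exact hzmax w hw
  simpa using hmem.2
end

section
/- Let α ≥ 0 and N ≥ 1. For i = 1,…,N let U_i : ℝ → ℝ be concave and differentiable. Let p, p̂ ∈ ℝ with p ≤ p̂, and let x, x̂ ∈ ℝ^N with x_i ≥ 0 and x̂_i ≥ 0 for all i and ∑_i x_i < ∑_i x̂_i. Assume positive surpluses: U_i(x_i) − p·x_i > 0 and U_i(x̂_i) − p̂·x̂_i > 0 for all i. Suppose there exist λ, λ̂ ∈ ℝ such that for all i, (U_i'(x_i) − p) / (U_i(x_i) − p·x_i)^α = λ and (U_i'(x̂_i) − p̂) / (U_i(x̂_i) − p̂·x̂_i)^α = λ̂. Then λ̂ ≥ 0 implies λ ≥ 0. -/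
/-- Comparative statics of the budget multiplier in the α-fair
allocation problem. If the first-order conditions hold at `(x, p)` with
multiplier `λ` and at `(x̂, p̂)` with multiplier `λ̂`, where `p ≤ p̂`, the total
allocation is strictly larger at `x̂`, and all surpluses are positive, then
`λ̂ ≥ 0` implies `λ ≥ 0`. The power is the real power (rpow). -/
theorem budget_multiplier_sign_monotone
    (α : ℝ) (hα : 0 ≤ α) (N : ℕ) (hN : 1 ≤ N)
    (U : Fin N → ℝ → ℝ)
    (hUconc : ∀ i, ConcaveOn ℝ Set.univ (U i))
    (hUdiff : ∀ i, Differentiable ℝ (U i))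
    (p phat : ℝ) (hp : p ≤ phat)
    (x xhat : Fin N → ℝ)
    (hx : ∀ i, 0 ≤ x i) (hxhat : ∀ i, 0 ≤ xhat i)
    (hsum : ∑ i, x i < ∑ i, xhat i)
    (hs : ∀ i, 0 < U i (x i) - p * x i)
    (hshat : ∀ i, 0 < U i (xhat i) - phat * xhat i)
    (lam lamhat : ℝ)
    (hlam : ∀ i, (deriv (U i) (x i) - p) / (U i (x i) - p * x i) ^ α = lam)
    (hlamhat : ∀ i,
      (deriv (U i) (xhat i) - phat) / (U i (xhat i) - phat * xhat i) ^ α = lamhat)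
    (hpos : 0 ≤ lamhat) :
    0 ≤ lam := by
  obtain ⟨i, -, hi⟩ := Finset.exists_lt_of_sum_lt hsum
  -- Some user gets strictly more at `xhat`; concavity makes that user's marginal utility at `x i`
  -- at least the one at `xhat i`, which is at least `phat ≥ p` because `0 ≤ lamhat`.
  have hmarg : deriv (U i) (xhat i) ≤ deriv (U i) (x i) :=
    (hUconc i).antitoneOn_deriv (fun y _ => hUdiff i y)
      (Set.mem_univ _) (Set.mem_univ _) hi.le
  have hprice : 0 ≤ deriv (U i) (xhat i) - phat := by
    have hpow := Real.rpow_pos_of_pos (hshat i) α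
    rw [(div_eq_iff hpow.ne').mp (hlamhat i)]
    exact mul_nonneg hpos hpow.le
  rw [← hlam i]
  exact div_nonneg (by linarith) (Real.rpow_nonneg (hs i).le α)
end
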